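/- Let Ω be an algebraically closed field and let E ⊆ A and E ⊆ B be subfields of Ω. Assume that the extensions A/E and B/E are regular (i.e. A, and likewise B, is linearly disjoint over E from the relative algebraic closure of E in Ω) and that A and B are linearly disjoint over E. Then (A^s·B) ∩ B^s = E^s·B, where A^s, B^s, E^s denote the relative separable closures in Ω of A, B, E respectively, and A^s·B (resp. E^s·B) denotes the compositum subfield of Ω generated by A^s and B (resp. by E^s and B). -/

import Mathlib

/-- `S` and `T` are linearly disjoint over the subfield `E`: every finite family of
elements of `S` that is linearly independent over `E` is also linearly independent
with coefficients taken from `T`. -/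
def LinDisjOver {Ω : Type*} [Field Ω] (E : Subfield Ω) (S T : Set Ω) : Prop :=
  ∀ (n : ℕ) (a : Fin n → Ω), (∀ i, a i ∈ S) →
    (∀ c : Fin n → Ω, (∀ i, c i ∈ E) → ∑ i, c i * a i = 0 → ∀ i, c i = 0) →
    ∀ c : Fin n → Ω, (∀ i, c i ∈ T) → ∑ i, c i * a i = 0 → ∀ i, c i = 0

/-- The relative algebraic closure of a subfield `F` in `Ω`: the set of elements of `Ω`
that are algebraic over `F`. -/
def relAlgClosure {Ω : Type*} [Field Ω] (F : Subfield Ω) : Set Ω :=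
  {x : Ω | IsAlgebraic F x}

/-- The relative separable closure of a subfield `F` in `Ω`: the set of elements of `Ω`
that are separably algebraic over `F`. -/
def relSepClosure {Ω : Type*} [Field Ω] (F : Subfield Ω) : Set Ω :=
  {x : Ω | IsSeparable F x}

/-!
If `k` is algebraically closed, `K ⊗[k] L` is a domain for all field extensions `K` and `L` of `k`
(specialize coordinates of nonzero tensors by a `k`-point of a finitely generated subalgebra of
`K`). When `K`, `L`, `k` are the algebraic closures of `A`, `B`, `E` in `Ω`, the domain `K ⊗[k] L`
is integral over the image of `A ⊗[E] B`, so a nonzero kernel of `K ⊗[k] L → Ω` would meet that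
image nontrivially; hence linear disjointness of `A` and `B` over `E` gives that of `K` and `L` over
`k`. Comparing coordinates in a `k`-basis of `K` then yields `(K·M) ∩ L = M` for `k ⊆ M ⊆ L`, in
particular `(K·B) ∩ L = k·B`. Finally `k·B` is purely inseparable over `Eˢ·B`, so its elements that
are separable over `B` already lie in `Eˢ·B`.
-/

open TensorProduct

section TensorProductDomain

lemma exists_algHom_apply_ne_zero {k R : Type*} [Field k] [IsAlgClosed k] [CommRing R]
    [IsReduced R] [Algebra k R] [Algebra.FiniteType k R] {r : R} (hr : r ≠ 0) :
    ∃ ψ : R →ₐ[k] k, ψ r ≠ 0 := by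
  have : IsJacobsonRing R := isJacobsonRing_of_finiteType (A := k)
  have hjac : (⊥ : Ideal R).jacobson = ⊥ :=
    IsJacobsonRing.out this (Ideal.isRadical_iff_quotient_reduced _ |>.mpr <|
      isReduced_of_injective _ (RingEquiv.quotientBot R).injective)
  obtain ⟨m, hm, hrm⟩ : ∃ m : Ideal R, m.IsMaximal ∧ r ∉ m := by
    by_contra! h
    have hr_mem : r ∈ (⊥ : Ideal R).jacobson := Ideal.mem_sInf.mpr fun {m} hm ↦ h m hm.2
    exact hr (by rwa [hjac] at hr_mem)
  let : Field (R ⧸ m) := Ideal.Quotient.field m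
  have : Module.Finite k (R ⧸ m) := finite_of_finite_type_of_isJacobsonRing k (R ⧸ m)
  let e : k ≃ₐ[k] R ⧸ m := AlgEquiv.ofBijective (Algebra.ofId k _)
    IsAlgClosed.algebraMap_bijective_of_isIntegral
  refine ⟨e.symm.toAlgHom.comp (Ideal.Quotient.mkₐ k m), fun h ↦ hrm ?_⟩
  exact Ideal.Quotient.eq_zero_iff_mem.mp ((map_eq_zero_iff _ e.symm.injective).mp h)

lemma repr_lid_map_eq {k R S ι : Type*} [CommRing k] [CommRing R] [Ring S]
    [Algebra k R] [Algebra k S] (b : Module.Basis ι k S) (ψ : R →ₐ[k] k) (w : R ⊗[k] S) (i : ι) :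
    b.repr (Algebra.TensorProduct.lid k S (Algebra.TensorProduct.map ψ (.id k S) w)) i =
      ψ ((Algebra.TensorProduct.basis R b).repr w i) := by
  induction w with
  | zero => simp
  | add x y hx hy => simp only [map_add, Finsupp.add_apply, hx, hy]
  | tmul r s => simp [Algebra.TensorProduct.basis_repr_tmul]

lemma noZeroDivisors_tensorProduct_of_finiteType (k R S : Type*) [Field k] [IsAlgClosed k]
    [CommRing R] [IsDomain R] [Algebra k R] [Algebra.FiniteType k R]
    [Ring S] [NoZeroDivisors S] [Algebra k S] : NoZeroDivisors (R ⊗[k] S) := by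
  let b := Module.Basis.ofVectorSpace k S
  let c := Algebra.TensorProduct.basis R b
  refine ⟨fun {u v} huv ↦ ?_⟩
  by_contra! h
  obtain ⟨i, hi⟩ := Finsupp.ne_iff.mp (c.repr.map_ne_zero_iff.mpr h.1)
  obtain ⟨j, hj⟩ := Finsupp.ne_iff.mp (c.repr.map_ne_zero_iff.mpr h.2)
  obtain ⟨ψ, hψ⟩ := exists_algHom_apply_ne_zero (k := k) (mul_ne_zero hi hj)
  let Ψ := (Algebra.TensorProduct.lid k S).toAlgHom.comp (Algebra.TensorProduct.map ψ (.id k S))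
  have hΨ {w i} (hw : Ψ w = 0) : ψ (c.repr w i) = 0 := by
    rw [← repr_lid_map_eq, ← Finsupp.zero_apply (a := i), ← map_zero b.repr]
    exact congr(b.repr $hw i)
  have hΨuv : Ψ u * Ψ v = 0 := by rw [← map_mul, huv, map_zero]
  rw [map_mul] at hψ
  exact (mul_eq_zero.mp hΨuv).elim (fun hu ↦ left_ne_zero_of_mul hψ (hΨ hu))
    fun hv ↦ right_ne_zero_of_mul hψ (hΨ hv)

lemma baseChange_mono {R C A : Type*} [CommSemiring R] [CommSemiring C] [Semiring A] [Algebra R A]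
    [Algebra R C] {D D' : Subalgebra R A} (h : D ≤ D') : D.baseChange C ≤ D'.baseChange C := by
  have hcomp : Algebra.TensorProduct.map (.id C C) D.val =
      (Algebra.TensorProduct.map (.id C C) D'.val).comp
        (Algebra.TensorProduct.map (.id C C) (Subalgebra.inclusion h)) := by
    ext; rfl
  exact (congrArg AlgHom.range hcomp).trans_le (AlgHom.range_comp_le_range _ _)

lemma noZeroDivisors_tensorProduct_of_forall_fg {R C A : Type*} [CommRing R]
    [CommRing C] [Ring A] [Algebra R A] [Algebra R C] [Module.Flat R C]
    (h : ∀ D : Subalgebra R A, D.FG → NoZeroDivisors (C ⊗[R] D)) :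
    NoZeroDivisors (C ⊗[R] A) := by
  refine ⟨fun {u v} huv ↦ ?_⟩
  obtain ⟨D₁, hD₁, hu⟩ := exists_fg_and_mem_baseChange u
  obtain ⟨D₂, hD₂, hv⟩ := exists_fg_and_mem_baseChange v
  obtain ⟨u, rfl⟩ := baseChange_mono (le_sup_left (b := D₂)) hu
  obtain ⟨v, rfl⟩ := baseChange_mono (le_sup_right (a := D₁)) hv
  have := h _ (hD₁.sup hD₂)
  have hinj : Function.Injective (Algebra.TensorProduct.map (.id C C) (D₁ ⊔ D₂).val) :=
    Module.Flat.lTensor_preserves_injective_linearMap _ Subtype.val_injective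
  have huv' : u * v = 0 := hinj (by rw [map_mul, map_zero]; exact huv)
  obtain rfl | rfl := mul_eq_zero.mp huv'
  exacts [.inl (map_zero _), .inr (map_zero _)]

lemma isDomain_tensorProduct (k R S : Type*) [Field k] [IsAlgClosed k] [CommRing R] [IsDomain R]
    [Algebra k R] [CommRing S] [IsDomain S] [Algebra k S] : IsDomain (R ⊗[k] S) := by
  have : NoZeroDivisors (R ⊗[k] S) := by
    refine noZeroDivisors_tensorProduct_of_forall_fg fun D hD ↦ ?_
    have : Algebra.FiniteType k D := D.fg_iff_finiteType.mp hD
    have := noZeroDivisors_tensorProduct_of_finiteType k D R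
    exact (Algebra.TensorProduct.comm k R D).toMulEquiv.noZeroDivisors
  have := Algebra.TensorProduct.nontrivial_of_algebraMap_injective_of_isDomain k R S
    (algebraMap k R).injective (algebraMap k S).injective
  exact NoZeroDivisors.to_isDomain _

end TensorProductDomain

section Integral

lemma isIntegral_of_forall_tmul {k K L R : Type*} [CommRing k] [CommRing K] [CommRing L]
    [CommRing R] [Algebra k K] [Algebra k L] {f : R →+* K ⊗[k] L}
    (hK : ∀ x : K, f.IsIntegralElem (x ⊗ₜ 1)) (hL : ∀ y : L, f.IsIntegralElem (1 ⊗ₜ y)) :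
    f.IsIntegral := fun w ↦ by
  induction w with
  | zero => exact f.isIntegralElem_zero
  | add x y hx hy => exact hx.add f hy
  | tmul x y => simpa using (hK x).mul f (hL y)

lemma injective_of_comp_injective_of_isIntegral {R S T : Type*} [CommRing R] [CommRing S]
    [IsDomain S] [CommRing T] {f : R →+* S} (hf : f.IsIntegral) {φ : S →+* T}
    (hφ : Function.Injective (φ.comp f)) : Function.Injective φ := by
  let := f.toAlgebra
  have : Algebra.IsIntegral R S := ⟨hf⟩
  have : Nontrivial R := f.domain_nontrivial
  rw [RingHom.injective_iff_ker_eq_bot] at hφ ⊢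
  exact Ideal.eq_bot_of_comap_eq_bot (R := R) ((RingHom.comap_ker φ f).trans hφ)

end Integral

section ProductMap

open Algebra.TensorProduct

variable {E k A B K L T : Type*} [CommRing E] [Field k] [CommRing A] [CommRing B]
  [CommRing K] [CommRing L] [CommRing T] [Algebra E k] [Algebra E A] [Algebra E B] [Algebra E K]
  [Algebra E L] [Algebra E T] [Algebra k K] [Algebra k L] [Algebra k T] [IsScalarTower E k K]
  [IsScalarTower E k L] [IsScalarTower E k T]

lemma injective_productMap_of_isIntegral [IsAlgClosed k] [IsDomain K] [IsDomain L]
    {i : A →ₐ[E] K} {j : B →ₐ[E] L} (hi : i.toRingHom.IsIntegral) (hj : j.toRingHom.IsIntegral)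
    {g : K →ₐ[k] T} {h : L →ₐ[k] T}
    (hinj : Function.Injective
      (productMap ((g.restrictScalars E).comp i) ((h.restrictScalars E).comp j))) :
    Function.Injective (productMap g h) := by
  let f : A ⊗[E] B →ₐ[E] K ⊗[k] L := productMap
    (((includeLeft : K →ₐ[k] K ⊗[k] L).restrictScalars E).comp i)
    (((includeRight : L →ₐ[k] K ⊗[k] L).restrictScalars E).comp j)
  have hf : f.toRingHom.IsIntegral := by
    have hleft : (includeLeft : K →ₐ[k] K ⊗[k] L).toRingHom.comp i.toRingHom =
        f.toRingHom.comp includeLeftRingHom := by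
      ext; simp [f]
    have hright : (includeRight : L →ₐ[k] K ⊗[k] L).toRingHom.comp j.toRingHom =
        f.toRingHom.comp (includeRight : B →ₐ[E] A ⊗[E] B).toRingHom := by
      ext; simp [f]
    exact isIntegral_of_forall_tmul (fun x ↦ .of_comp (hleft ▸ (hi x).map _))
      fun y ↦ .of_comp (hright ▸ (hj y).map _)
  have := isDomain_tensorProduct k K L
  refine injective_of_comp_injective_of_isIntegral hf (φ := (productMap g h).toRingHom) ?_
  have hcomp : ((productMap g h).restrictScalars E).comp f =
      productMap ((g.restrictScalars E).comp i) ((h.restrictScalars E).comp j) := by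
    ext <;> simp [f]
  rw [← hcomp] at hinj
  exact hinj

end ProductMap

section LinearDisjoint

variable {E k Ω : Type*} [Field E] [Field k] [Field Ω] [Algebra E k] [Algebra k Ω] [Algebra E Ω]
  [IsScalarTower E k Ω]

lemma isIntegral_inclusion {A B : IntermediateField E Ω} (h : A ≤ B)
    (hB : ∀ x ∈ B, IsAlgebraic A x) : (IntermediateField.inclusion h).toRingHom.IsIntegral :=
  fun x ↦ .of_map B.val.injective (g := B.val.toRingHom) (hB x x.2).isIntegral

theorem linearDisjoint_of_isAlgebraic [IsAlgClosed k] {A B : IntermediateField E Ω}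
    {K L : IntermediateField k Ω} (hAK : A ≤ K.restrictScalars E) (hBL : B ≤ L.restrictScalars E)
    (hK : ∀ x ∈ K, IsAlgebraic A x) (hL : ∀ x ∈ L, IsAlgebraic B x) (h : A.LinearDisjoint B) :
    K.LinearDisjoint L := by
  rw [IntermediateField.linearDisjoint_iff', Subalgebra.linearDisjoint_iff_injective] at h ⊢
  let i : A →ₐ[E] K := IntermediateField.inclusion hAK
  let j : B →ₐ[E] L := IntermediateField.inclusion hBL
  exact injective_productMap_of_isIntegral (i := i) (j := j)
    (isIntegral_inclusion hAK hK) (isIntegral_inclusion hBL hL) h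

end LinearDisjoint

lemma mem_range_algebraMap_of_smul_mem_span {M L V ι : Type*} [Field M] [Field L] [AddCommGroup V]
    [Algebra M L] [Module M V] [Module L V] [IsScalarTower M L V] {v : ι → V}
    (hv : LinearIndependent L v) {x : L} {s : V} (hs₀ : s ≠ 0)
    (hs : s ∈ Submodule.span M (Set.range v)) (hxs : x • s ∈ Submodule.span M (Set.range v)) :
    x ∈ (algebraMap M L).range := by
  obtain ⟨c, rfl⟩ := (Finsupp.mem_span_range_iff_exists_finsupp).mp hs
  obtain ⟨d, hd⟩ := (Finsupp.mem_span_range_iff_exists_finsupp).mp hxs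
  have hcoeff (i : ι) : algebraMap M L (d i) = x * algebraMap M L (c i) := by
    have hcd : Finsupp.linearCombination L v (d.mapRange (algebraMap M L) (map_zero _)) =
        Finsupp.linearCombination L v (x • c.mapRange (algebraMap M L) (map_zero _)) := by
      simpa [Finsupp.linearCombination_apply, Finsupp.sum_mapRange_index] using hd
    exact DFunLike.congr_fun (hv hcd) i
  obtain ⟨i, hi⟩ : ∃ i, c i ≠ 0 := by
    by_contra! hc
    exact hs₀ (by simp [Finsupp.ext (g := 0) hc])
  refine ⟨d i / c i, ?_⟩
  rw [map_div₀, hcoeff, mul_div_cancel_right₀]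
  exact (map_ne_zero _).mpr hi

section ModularLaw

variable {k Ω : Type*} [Field k] [Field Ω] [Algebra k Ω]

theorem sup_inf_eq_of_linearDisjoint {K L M : IntermediateField k Ω}
    (h : K.LinearDisjoint L) (hML : M ≤ L) : (K ⊔ M) ⊓ L = M := by
  refine le_antisymm (fun z ⟨hz, hzL⟩ ↦ ?_) (le_inf le_sup_right hML)
  let : Algebra M L := (IntermediateField.inclusion hML).toAlgebra
  have : IsScalarTower M L Ω := .of_algebraMap_eq' rfl
  let b := Module.Basis.ofVectorSpace k K
  have hspan {w : Ω} (hw : w ∈ Algebra.adjoin M (K : Set Ω)) :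
      w ∈ Submodule.span M (Set.range (K.val ∘ b)) :=
    (K.toSubalgebra.adjoin_eq_span_basis M b).le hw
  have hz : z ∈ IntermediateField.adjoin M (K : Set Ω) := by
    rwa [← IntermediateField.mem_restrictScalars k, IntermediateField.restrictScalars_adjoin_eq_sup,
      IntermediateField.adjoin_self, sup_comm]
  obtain ⟨r, hr, s, hs, rfl⟩ := IntermediateField.mem_adjoin_iff_div.mp hz
  obtain rfl | hs₀ := eq_or_ne s 0
  · simp
  have hsmul : (⟨r / s, hzL⟩ : L) • s = r := div_mul_cancel₀ r hs₀
  obtain ⟨y, hy⟩ := mem_range_algebraMap_of_smul_mem_span (h.linearIndependent_left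
    b.linearIndependent) hs₀ (hspan hs) (hsmul ▸ hspan hr)
  have hy_val : (y : Ω) = r / s := congrArg Subtype.val hy
  exact hy_val ▸ y.2

end ModularLaw

section Closures

open IntermediateField

variable {F Ω : Type*} [Field F] [Field Ω] [Algebra F Ω]

lemma le_restrictScalars_algebraicClosure (L : IntermediateField F Ω) :
    L ≤ (algebraicClosure L Ω).restrictScalars F :=
  fun x hx ↦ (algebraicClosure L Ω).algebraMap_mem ⟨x, hx⟩

theorem algebraicClosure_sup_inf_algebraicClosure [IsAlgClosed (algebraicClosure F Ω)]
    {A B : IntermediateField F Ω} (h : A.LinearDisjoint B) :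
    ((algebraicClosure A Ω).restrictScalars F ⊔ B) ⊓ (algebraicClosure B Ω).restrictScalars F =
      algebraicClosure F Ω ⊔ B := by
  have hA : algebraicClosure F Ω ≤ (algebraicClosure A Ω).restrictScalars F :=
    algebraicClosure.le_restrictScalars F A Ω
  have hB : algebraicClosure F Ω ≤ (algebraicClosure B Ω).restrictScalars F :=
    algebraicClosure.le_restrictScalars F B Ω
  have hdisj : (extendScalars hA).LinearDisjoint (extendScalars hB) :=
    linearDisjoint_of_isAlgebraic (A := A) (B := B) (le_restrictScalars_algebraicClosure A)
      (le_restrictScalars_algebraicClosure B) (fun _ hx ↦ mem_algebraicClosure_iff.mp hx)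
      (fun _ hx ↦ mem_algebraicClosure_iff.mp hx) h
  have hmod : (extendScalars hA ⊔ extendScalars (le_sup_left (b := B))) ⊓ extendScalars hB =
      extendScalars (le_sup_left (b := B)) :=
    sup_inf_eq_of_linearDisjoint hdisj
      ((extendScalars_le_extendScalars_iff _ _).mpr
        (sup_le hB (le_restrictScalars_algebraicClosure B)))
  rw [extendScalars_sup, extendScalars_inf] at hmod
  have hrestrict := congrArg (restrictScalars F) hmod
  rwa [extendScalars_restrictScalars, extendScalars_restrictScalars, ← sup_assoc,
    sup_eq_left.mpr hA] at hrestrict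

lemma exists_isSeparable_pow {R : Type*} [Ring R] [IsDomain R] [Algebra F R] {x : R} (q : ℕ)
    [ExpChar F q] (hx : IsAlgebraic F x) :
    ∃ n : ℕ, IsSeparable F (x ^ q ^ n) := by
  obtain ⟨g, hg, n, hgn⟩ := (minpoly.irreducible hx.isIntegral).hasSeparableContraction q
  refine ⟨n, hg.of_dvd (minpoly.dvd F _ ?_)⟩
  rw [← Polynomial.expand_aeval, hgn, minpoly.aeval]

lemma algebraicClosure_sup_le_perfectClosure (L : IntermediateField F Ω) :
    algebraicClosure F Ω ⊔ L ≤
      (perfectClosure ↥(separableClosure F Ω ⊔ L) Ω).restrictScalars F := by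
  refine sup_le (fun x hx ↦ ?_) (fun x hx ↦ ?_)
  · obtain ⟨q, _⟩ := ExpChar.exists F
    have : ExpChar ↥(separableClosure F Ω ⊔ L) q := expChar_of_injective_algebraMap
      (algebraMap F ↥(separableClosure F Ω ⊔ L)).injective q
    obtain ⟨n, hn⟩ := exists_isSeparable_pow q (mem_algebraicClosure_iff.mp hx)
    exact (mem_perfectClosure_iff_pow_mem q).mpr ⟨n, ⟨_, le_sup_left (b := L) hn⟩, rfl⟩
  · exact (perfectClosure ↥(separableClosure F Ω ⊔ L) Ω).algebraMap_mem
      ⟨x, le_sup_right (a := separableClosure F Ω) hx⟩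

lemma separableClosure_le_algebraicClosure (F Ω : Type*) [Field F] [Field Ω] [Algebra F Ω] :
    separableClosure F Ω ≤ algebraicClosure F Ω := fun _ hx ↦
  mem_algebraicClosure_iff.mpr (mem_separableClosure_iff.mp hx).isIntegral.isAlgebraic

theorem separableClosure_sup_inf_separableClosure [IsAlgClosed (algebraicClosure F Ω)]
    {A B : IntermediateField F Ω} (h : A.LinearDisjoint B) :
    ((separableClosure A Ω).restrictScalars F ⊔ B) ⊓ (separableClosure B Ω).restrictScalars F =
      separableClosure F Ω ⊔ B := by
  refine le_antisymm (fun x ⟨hxA, hxB⟩ ↦ ?_) (le_inf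
    (sup_le_sup_right (separableClosure.le_restrictScalars F A Ω) B)
    (sup_le (separableClosure.le_restrictScalars F B Ω) (le_restrictScalars_separableClosure B)))
  have hx : x ∈ algebraicClosure F Ω ⊔ B := by
    rw [← algebraicClosure_sup_inf_algebraicClosure h]
    exact ⟨sup_le_sup_right (fun _ hy ↦ separableClosure_le_algebraicClosure A Ω hy) B hxA,
      separableClosure_le_algebraicClosure B Ω hxB⟩
  have hperf := algebraicClosure_sup_le_perfectClosure B hx
  let N := separableClosure F Ω ⊔ B
  let : Algebra B N := (inclusion (le_sup_right : B ≤ N)).toAlgebra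
  have : IsScalarTower B N Ω := .of_algebraMap_eq' rfl
  have hsep : x ∈ separableClosure N Ω := separableClosure.le_restrictScalars B N Ω hxB
  have hbot : x ∈ separableClosure N Ω ⊓ perfectClosure N Ω := ⟨hsep, hperf⟩
  rw [separableClosure_inf_perfectClosure] at hbot
  obtain ⟨y, rfl⟩ := IntermediateField.mem_bot.mp hbot
  exact y.2

end Closures

lemma LinDisjOver.linearDisjoint {Ω : Type*} [Field Ω] {E A B : Subfield Ω} (hEA : E ≤ A)
    (hEB : E ≤ B) (h : LinDisjOver E (A : Set Ω) (B : Set Ω)) :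
    (Subfield.extendScalars hEA).LinearDisjoint (Subfield.extendScalars hEB) := by
  let b := Module.Basis.ofVectorSpace E (Subfield.extendScalars hEA)
  have hb : LinearIndependent E ((↑) ∘ b : _ → Ω) :=
    b.linearIndependent.map' (Subfield.extendScalars hEA).val.toLinearMap
      (LinearMap.ker_eq_bot.mpr Subtype.val_injective)
  refine .of_basis_left b (linearIndependent_iff_finset_linearIndependent.mpr fun s ↦ ?_)
  let e := s.equivFin.symm
  rw [← linearIndependent_equiv e]
  have hbs := (hb.comp _ Subtype.val_injective).comp e e.injective
  rw [Fintype.linearIndependent_iff] at hbs ⊢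
  refine fun c hc i ↦ Subtype.ext <| h _ _ (fun j ↦ (b (e j)).2) (fun d hd hsum j ↦ ?_)
    (fun j ↦ c j) (fun j ↦ (c j).2) hc i
  exact congrArg Subtype.val (hbs (fun j ↦ ⟨d j, hd j⟩) hsum j)

theorem sep_compositum_inter_general {Ω : Type*} [Field Ω] (E A B : Subfield Ω)
    [IsAlgClosed (algebraicClosure E Ω)] (hEA : E ≤ A) (hEB : E ≤ B)
    (hdisj : LinDisjOver E (A : Set Ω) (B : Set Ω)) :
    ((Subfield.closure (relSepClosure A ∪ (B : Set Ω)) : Subfield Ω) : Set Ω) ∩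
        relSepClosure B =
      ((Subfield.closure (relSepClosure E ∪ (B : Set Ω)) : Subfield Ω) : Set Ω) := by
  let A' := Subfield.extendScalars hEA
  let B' := Subfield.extendScalars hEB
  have hinter : ((separableClosure A' Ω).restrictScalars E ⊔ B') ⊓
      (separableClosure B' Ω).restrictScalars E = separableClosure E Ω ⊔ B' :=
    separableClosure_sup_inf_separableClosure (hdisj.linearDisjoint hEA hEB)
  have closure_eq (K : IntermediateField E Ω) :
      Subfield.closure (K ∪ (B : Set Ω)) = (K ⊔ B').toSubfield := by
    rw [Subfield.closure_union, IntermediateField.sup_toSubfield,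
      ← IntermediateField.coe_toSubfield, Subfield.closure_eq, Subfield.closure_eq,
      Subfield.extendScalars_toSubfield]
  have hE : relSepClosure E = separableClosure E Ω := rfl
  have hA : relSepClosure A = (separableClosure A' Ω).restrictScalars E := rfl
  have hB : relSepClosure B = (separableClosure B' Ω).restrictScalars E := rfl
  rw [hE, hA, hB, closure_eq, closure_eq]
  exact congrArg SetLike.coe hinter

/-- Let `Ω` be an algebraically closed field and `E ⊆ A`, `E ⊆ B` subfields of `Ω`.
If `A/E` and `B/E` are regular (each of `A`, `B` is linearly disjoint over `E` from
the relative algebraic closure of `E` in `Ω`) and `A`, `B` are linearly disjoint over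
`E`, then `(Aˢ·B) ∩ Bˢ = Eˢ·B`, where `·` denotes the compositum subfield. -/
theorem sep_compositum_inter {Ω : Type*} [Field Ω] [IsAlgClosed Ω]
    (E A B : Subfield Ω) (hEA : E ≤ A) (hEB : E ≤ B)
    (hregA : LinDisjOver E (A : Set Ω) (relAlgClosure E))
    (hregB : LinDisjOver E (B : Set Ω) (relAlgClosure E))
    (hdisj : LinDisjOver E (A : Set Ω) (B : Set Ω)) :
    ((Subfield.closure (relSepClosure A ∪ (B : Set Ω)) : Subfield Ω) : Set Ω) ∩
        relSepClosure B =
      ((Subfield.closure (relSepClosure E ∪ (B : Set Ω)) : Subfield Ω) : Set Ω) :=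
  have : IsAlgClosed (algebraicClosure E Ω) := IsAlgClosure.isAlgClosed E
  sep_compositum_inter_general E A B hEA hEB hdisj
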